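/- arXiv:2105.12503 — 2 statements merged into one kernel-verified Lean document; each statement's English description precedes it below -/
import Mathlib

section
/- Let H and F be graphs with chromatic numbers r+1 and s+1 respectively, where r ≥ 1. If s ≥ r, or F is not a complete multipartite graph, then the induced Turán number ex(n, {H, F-ind}) equals (1 - 1/r + o(1))·C(n,2) as n → ∞; that is, ex(n, {H, F-ind}) / C(n,2) → 1 - 1/r as n → ∞. -/
open SimpleGraph Filter

/-- `G` contains a (not necessarily induced) copy of `H`: an injective graph homomorphism. -/
def ContainsCopy {α β : Type*} (H : SimpleGraph α) (G : SimpleGraph β) : Prop :=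
  ∃ f : H →g G, Function.Injective f

/-- `G` contains an induced copy of `F`: a graph embedding. -/
def ContainsInducedCopy {α β : Type*} (F : SimpleGraph α) (G : SimpleGraph β) : Prop :=
  Nonempty (F ↪g G)

/-- The induced Turán number `ex(n, {H, F-ind})`: the maximum number of edges in an
`n`-vertex graph with no copy of `H` and no induced copy of `F`. -/
noncomputable def inducedTuranNumber {α β : Type*} (H : SimpleGraph α) (F : SimpleGraph β)
    (n : ℕ) : ℕ :=
  sSup {m | ∃ G : SimpleGraph (Fin n),
    ¬ ContainsCopy H G ∧ ¬ ContainsInducedCopy F G ∧ m = G.edgeSet.ncard}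

/-- A graph is complete multipartite if its vertices can be assigned to parts so that
two vertices are adjacent iff they lie in different parts. -/
def IsCompleteMultipartite {α : Type*} (G : SimpleGraph α) : Prop :=
  ∃ (ι : Type) (f : α → ι), ∀ a b, G.Adj a b ↔ f a ≠ f b

/-- A graph is complete `k`-partite if its vertices can be partitioned into `k` (nonempty)
parts so that two vertices are adjacent iff they lie in different parts. -/
def IsCompleteMultipartiteWith {α : Type*} (G : SimpleGraph α) (k : ℕ) : Prop :=
  ∃ f : α → Fin k, Function.Surjective f ∧ ∀ a b, G.Adj a b ↔ f a ≠ f b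

/-!
The lower bound is witnessed by the `r`-partite Turán graph. It is `r`-colorable, hence contains no
graph of larger chromatic number, and every induced subgraph of it is complete multipartite.

The upper bound is the Erdős–Stone bound on `extremalNumber n H`. Delete a vertex of minimum degree
from an extremal graph: by the minimum-degree version of the Erdős–Stone theorem, the increments of
`n ↦ extremalNumber n H` are eventually at most `(1 - 1 / r + ε) * n`. Since `n` is the increment of
`n ↦ n.choose 2`, the bound on the limit of the quotients follows as in the Stolz–Cesàro theorem.
-/

/-- One half of the Stolz–Cesàro theorem. -/
theorem le_of_tendsto_div_of_eventually_sub_le {K : Type*} [Field K] [LinearOrder K]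
    [IsStrictOrderedRing K] [TopologicalSpace K] [OrderTopology K] {u v : ℕ → K} {c L : K}
    (hv : Tendsto v atTop atTop)
    (huv : ∀ᶠ n in atTop, u (n + 1) - u n ≤ c * (v (n + 1) - v n))
    (hL : Tendsto (fun n => u n / v n) atTop (nhds L)) : L ≤ c := by
  obtain ⟨N, hN⟩ := eventually_atTop.1 huv
  have hanti : AntitoneOn (fun n => u n - c * v n) (Set.Ici N) :=
    antitoneOn_nat_Ici_of_succ_le fun n hn => by linarith [hN n hn]
  have hlim : Tendsto (fun n => (u N - c * v N) / v n + c) atTop (nhds c) := by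
    simpa only [zero_add] using (hv.const_div_atTop (u N - c * v N)).add_const c
  refine le_of_tendsto_of_tendsto hL hlim ?_
  filter_upwards [eventually_ge_atTop N, hv.eventually_gt_atTop 0] with n hn hvn
  rw [div_add' _ _ _ hvn.ne', div_le_div_iff_of_pos_right hvn]
  linarith [hanti Set.self_mem_Ici hn hn]

theorem tendsto_choose_two_atTop : Tendsto (fun n : ℕ => n.choose 2) atTop atTop := by
  rw [← tendsto_add_atTop_iff_nat 1]
  refine tendsto_atTop_mono (fun n => ?_) tendsto_id
  rw [Nat.choose_succ_succ', Nat.choose_one_right]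
  exact Nat.le_add_right n _

section ErdosStoneSimonovits

theorem card_edgeFinset_le_extremalNumber_add_minDegree {V W : Type*} [Fintype V] [Nonempty V]
    {G : SimpleGraph V} [DecidableRel G.Adj] {H : SimpleGraph W} (hG : H.Free G) :
    G.edgeFinset.card ≤ extremalNumber (Fintype.card V - 1) H + G.minDegree := by
  classical
  obtain ⟨v, hv⟩ := G.exists_minimal_degree_vertex
  have hdelete := card_edgeFinset_deleteIncidenceSet_le_extremalNumber hG v
  rw [G.card_edgeFinset_deleteIncidenceSet v, ← hv] at hdelete
  exact Nat.sub_le_iff_le_add.1 hdelete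

variable {α : Type*} [Finite α] {H : SimpleGraph α} {r : ℕ}

theorem eventually_isContained_of_minDegree (hH : H.Colorable (r + 1)) {ε : ℝ} (hε : 0 < ε) :
    ∀ᶠ n : ℕ in atTop, ∀ {G : SimpleGraph (Fin n)} [DecidableRel G.Adj],
      (1 - 1 / (r : ℝ) + ε) * n ≤ G.minDegree → H ⊑ G := by
  classical
  have := Fintype.ofFinite α
  obtain ⟨C⟩ := hH
  have hcontained : H ⊑ completeEquipartiteGraph (r + 1) (Fintype.card α) :=
    isContained_completeEquipartiteGraph_of_colorable C _ fun _ => Fintype.card_subtype_le _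
  filter_upwards [eventually_completeEquipartiteGraph_isContained_of_minDegree hε r
    (Fintype.card α)] with n hn G _ hdegree
  exact hcontained.trans (hn hdegree)

theorem eventually_extremalNumber_succ_le (hH : H.Colorable (r + 1)) {ε : ℝ} (hε : 0 < ε) :
    ∀ᶠ n : ℕ in atTop, (extremalNumber (n + 1) H : ℝ) ≤
      extremalNumber n H + (1 - 1 / (r : ℝ) + ε) * n := by
  set c : ℝ := 1 - 1 / (r : ℝ)
  have hc : 0 ≤ c := Nat.one_sub_one_div_cast_nonneg r
  have hminDegree := (tendsto_add_atTop_nat 1).eventually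
    (eventually_isContained_of_minDegree hH (half_pos hε))
  have hlarge : ∀ᶠ n : ℕ in atTop, c + ε / 2 ≤ ε / 2 * n :=
    (tendsto_natCast_atTop_atTop.const_mul_atTop (half_pos hε)).eventually_ge_atTop _
  filter_upwards [hminDegree, hlarge] with n hn hnε
  rw [← Fintype.card_fin (n + 1), extremalNumber_le_iff_of_nonneg H (by positivity)]
  intro G _ hG
  have hlow : (G.minDegree : ℝ) < (c + ε / 2) * (n + 1 : ℕ) :=
    not_le.1 fun hdegree => hG (hn hdegree)
  have hedges : (G.edgeFinset.card : ℝ) ≤ extremalNumber n H + G.minDegree := by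
    exact_mod_cast Fintype.card_fin (n + 1) ▸ card_edgeFinset_le_extremalNumber_add_minDegree hG
  push_cast at hlow
  linarith

theorem turanDensity_le_of_colorable (hH : H.Colorable (r + 1)) :
    turanDensity H ≤ 1 - 1 / (r : ℝ) := by
  refine le_of_forall_pos_le_add fun ε hε => ?_
  refine le_of_tendsto_div_of_eventually_sub_le
    (tendsto_natCast_atTop_atTop.comp tendsto_choose_two_atTop) ?_ (tendsto_turanDensity H)
  filter_upwards [eventually_extremalNumber_succ_le hH hε] with n hn
  have hchoose : ((n + 1).choose 2 : ℝ) - n.choose 2 = n := by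
    simp [Nat.choose_succ_succ']
  simpa only [Function.comp_apply, hchoose, sub_le_iff_le_add'] using hn

end ErdosStoneSimonovits

section TuranGraph

theorem add_choose_two (m n : ℕ) :
    (m + n).choose 2 = m.choose 2 + m * n + n.choose 2 := by
  simp [Nat.add_choose_eq, Finset.Nat.antidiagonal_succ, add_comm]

theorem sub_one_mul_choose_two_le_mul_card_edgeFinset_turanGraph (n r : ℕ) :
    (r - 1) * n.choose 2 ≤ r * (turanGraph n r).edgeFinset.card := by
  obtain rfl | hr := r.eq_zero_or_pos
  · simp
  induction n using Nat.strong_induction_on with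
  | _ n ih =>
    obtain hnr | hrn := lt_or_ge n r
    · have hcard : (turanGraph n r).edgeFinset.card = n.choose 2 := by
        simp [card_edgeFinset_turanGraph, Nat.mod_eq_of_lt hnr]
      rw [hcard]
      exact Nat.mul_le_mul_right _ (Nat.sub_le r 1)
    · obtain ⟨m, rfl⟩ := Nat.exists_eq_add_of_le' hrn
      calc (r - 1) * (m + r).choose 2
          = (r - 1) * m.choose 2 + r * (m * (r - 1)) + (r - 1) * r.choose 2 := by
            rw [add_choose_two]; ring
        _ ≤ r * (turanGraph m r).edgeFinset.card + r * (m * (r - 1)) + r * r.choose 2 := by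
            gcongr ?_ + _ + ?_ * _
            · exact ih m (Nat.lt_add_of_pos_right hr)
            · exact Nat.sub_le r 1
        _ = r * (turanGraph (m + r) r).edgeFinset.card := by
            rw [card_edgeFinset_turanGraph_add]; ring

theorem one_sub_one_div_mul_choose_two_le_card_edgeFinset_turanGraph (n : ℕ) {r : ℕ}
    (hr : 0 < r) :
    (1 - 1 / (r : ℝ)) * n.choose 2 ≤ (turanGraph n r).edgeFinset.card := by
  have hr' : (0 : ℝ) < r := Nat.cast_pos.2 hr
  have hcount : ((r : ℝ) - 1) * n.choose 2 ≤ r * (turanGraph n r).edgeFinset.card := by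
    rw [← Nat.cast_pred hr]
    exact_mod_cast sub_one_mul_choose_two_le_mul_card_edgeFinset_turanGraph n r
  rw [one_sub_div hr'.ne', div_mul_eq_mul_div, div_le_iff₀' hr']
  exact hcount

theorem colorable_turanGraph (n : ℕ) {r : ℕ} (hr : 0 < r) : (turanGraph n r).Colorable r :=
  ⟨Coloring.mk (fun v => (⟨v % r, Nat.mod_lt _ hr⟩ : Fin r)) fun hvw heq =>
    hvw (Fin.mk.inj heq)⟩

theorem free_turanGraph {α : Type*} {H : SimpleGraph α} (n : ℕ) {r : ℕ} (hr : 0 < r)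
    (hH : ¬ H.Colorable r) : H.Free (turanGraph n r) :=
  fun ⟨f⟩ => hH ((colorable_turanGraph n hr).of_hom f.toHom)

theorem isCompleteMultipartite_turanGraph (n r : ℕ) :
    _root_.IsCompleteMultipartite (turanGraph n r) :=
  ⟨ℕ, fun v => v % r, fun _ _ => turanGraph_adj⟩

theorem IsCompleteMultipartite.comap {α β : Type*} {F : SimpleGraph α} {G : SimpleGraph β}
    (f : F ↪g G) (hG : _root_.IsCompleteMultipartite G) : _root_.IsCompleteMultipartite F := by
  obtain ⟨ι, part, hpart⟩ := hG
  exact ⟨ι, part ∘ f, fun a b => f.map_adj_iff.symm.trans (hpart (f a) (f b))⟩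

end TuranGraph

/-- The Erdős–Stone–Simonovits theorem. -/
theorem turanDensity_eq_of_chromaticNumber_eq {α : Type*} [Finite α] {H : SimpleGraph α} {r : ℕ}
    (hr : 0 < r) (hH : H.chromaticNumber = (r + 1 : ℕ)) : turanDensity H = 1 - 1 / (r : ℝ) := by
  obtain ⟨hcol, hncol⟩ := chromaticNumber_eq_iff_colorable_not_colorable.1 hH
  refine (turanDensity_le_of_colorable hcol).antisymm ((isGLB_turanDensity H).2 ?_)
  rintro _ ⟨n, hn, rfl⟩
  have hturan : (turanGraph n r).edgeFinset.card ≤ extremalNumber n H := by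
    simpa only [Fintype.card_fin] using
      card_edgeFinset_le_extremalNumber (free_turanGraph n hr hncol)
  rw [le_div_iff₀ (Nat.cast_pos.2 (Nat.choose_pos hn))]
  exact (one_sub_one_div_mul_choose_two_le_card_edgeFinset_turanGraph n hr).trans
    (Nat.cast_le.2 hturan)

section InducedTuran

variable {α β : Type*} {H : SimpleGraph α} {F : SimpleGraph β}

theorem containsCopy_iff_isContained {G : SimpleGraph β} : ContainsCopy H G ↔ H ⊑ G :=
  ⟨fun ⟨f, hf⟩ => ⟨⟨f, hf⟩⟩, fun ⟨f⟩ => ⟨f.toHom, f.injective⟩⟩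

theorem ncard_edgeSet_le_extremalNumber {n : ℕ} {G : SimpleGraph (Fin n)}
    (hG : ¬ ContainsCopy H G) : G.edgeSet.ncard ≤ extremalNumber n H := by
  classical
  rw [← coe_edgeFinset, Set.ncard_coe_finset]
  simpa only [Fintype.card_fin] using
    card_edgeFinset_le_extremalNumber (mt containsCopy_iff_isContained.2 hG)

theorem inducedTuranNumber_le_extremalNumber (H : SimpleGraph α) (F : SimpleGraph β) (n : ℕ) :
    inducedTuranNumber H F n ≤ extremalNumber n H := by
  refine csSup_le' ?_
  rintro _ ⟨G, hG, -, rfl⟩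
  exact ncard_edgeSet_le_extremalNumber hG

theorem ncard_edgeSet_le_inducedTuranNumber {n : ℕ} {G : SimpleGraph (Fin n)}
    (hH : ¬ ContainsCopy H G) (hF : ¬ ContainsInducedCopy F G) :
    G.edgeSet.ncard ≤ inducedTuranNumber H F n := by
  refine le_csSup ⟨extremalNumber n H, ?_⟩ ⟨G, hH, hF, rfl⟩
  rintro _ ⟨G', hG', -, rfl⟩
  exact ncard_edgeSet_le_extremalNumber hG'

theorem not_containsInducedCopy_turanGraph {n r : ℕ} (hr : 0 < r)
    (hF : ¬ F.Colorable r ∨ ¬ _root_.IsCompleteMultipartite F) :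
    ¬ ContainsInducedCopy F (turanGraph n r) := by
  rintro ⟨f⟩
  obtain hF | hF := hF
  · exact hF ((colorable_turanGraph n hr).of_hom f.toHom)
  · exact hF ((isCompleteMultipartite_turanGraph n r).comap f)

theorem one_sub_one_div_mul_choose_two_le_inducedTuranNumber (n : ℕ) {r : ℕ} (hr : 0 < r)
    (hH : ¬ H.Colorable r) (hF : ¬ F.Colorable r ∨ ¬ _root_.IsCompleteMultipartite F) :
    (1 - 1 / (r : ℝ)) * n.choose 2 ≤ inducedTuranNumber H F n := by
  have hturan := ncard_edgeSet_le_inducedTuranNumber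
    (mt containsCopy_iff_isContained.1 (free_turanGraph n hr hH))
    (not_containsInducedCopy_turanGraph hr hF)
  rw [← coe_edgeFinset, Set.ncard_coe_finset] at hturan
  exact (one_sub_one_div_mul_choose_two_le_card_edgeFinset_turanGraph n hr).trans
    (Nat.cast_le.2 hturan)

end InducedTuran

theorem inducedTuran_asymptotics_of_not_completeMultipartite_general
    {α β : Type*} [Finite α] (H : SimpleGraph α) (F : SimpleGraph β) (r : ℕ) (hr : 1 ≤ r)
    (hH : H.chromaticNumber = (r + 1 : ℕ))
    (hF : r < F.chromaticNumber ∨ ¬ _root_.IsCompleteMultipartite F) :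
    Tendsto (fun n : ℕ => (inducedTuranNumber H F n : ℝ) / (n.choose 2 : ℝ))
      atTop (nhds (1 - 1 / (r : ℝ))) := by
  have hncolH : ¬ H.Colorable r := (chromaticNumber_eq_iff_colorable_not_colorable.1 hH).2
  have hF' : ¬ F.Colorable r ∨ ¬ _root_.IsCompleteMultipartite F :=
    hF.imp_left fun hlt => mt chromaticNumber_le_iff_colorable.2 hlt.not_ge
  have hextremal : Tendsto (fun n : ℕ => (extremalNumber n H : ℝ) / n.choose 2) atTop
      (nhds (1 - 1 / (r : ℝ))) :=
    turanDensity_eq_of_chromaticNumber_eq hr hH ▸ tendsto_turanDensity H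
  refine tendsto_of_tendsto_of_tendsto_of_le_of_le' tendsto_const_nhds hextremal ?_ ?_
  · filter_upwards [tendsto_choose_two_atTop.eventually_gt_atTop 0] with n hn
    rw [le_div_iff₀ (Nat.cast_pos.2 hn)]
    exact one_sub_one_div_mul_choose_two_le_inducedTuranNumber n hr hncolH hF'
  · refine Eventually.of_forall fun n => ?_
    gcongr
    exact inducedTuranNumber_le_extremalNumber H F n

/-- If `χ(H) = r+1`, `χ(F) = s+1`, `r ≥ 1`, and either `s ≥ r` or `F` is not complete
multipartite, then `ex(n, {H, F-ind}) = (1 - 1/r + o(1)) * C(n,2)`. -/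
theorem inducedTuran_asymptotics_of_not_completeMultipartite
    {α β : Type*} [Fintype α] [Fintype β] (H : SimpleGraph α) (F : SimpleGraph β)
    (r s : ℕ) (hr : 1 ≤ r)
    (hH : H.chromaticNumber = (r + 1 : ℕ)) (hF : F.chromaticNumber = (s + 1 : ℕ))
    (hcase : s ≥ r ∨ ¬ _root_.IsCompleteMultipartite F) :
    Filter.Tendsto (fun n : ℕ => (inducedTuranNumber H F n : ℝ) / (n.choose 2 : ℝ))
      Filter.atTop (nhds (1 - 1 / (r : ℝ))) := by
  refine inducedTuran_asymptotics_of_not_completeMultipartite_general H F r hr hH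
    (hcase.imp_left fun hrs => ?_)
  rw [hF]
  exact_mod_cast Nat.lt_succ_of_le hrs
end

section
/- Let H be a graph and let m, t, s be positive integers such that every graph on m vertices contains either an independent set of size t or a copy of H as a subgraph. If a graph G contains the complete (s+1)-partite graph K_{s+1}(m) (with all parts of size m) as a subgraph and G contains no copy of H, then G contains an induced copy of K_{s+1}(t), the complete (s+1)-partite graph with all parts of size t. -/
open SimpleGraph Filter

/-!
Restrict `G` to each part of the copy of `K_{s+1}(m)`. Since a copy of `H` in such a restriction
would be a copy of `H` in `G`, each part contains an independent set of size `t`. All edges between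
distinct parts are present, so the chosen independent sets span an induced `K_{s+1}(t)`.
-/

section

variable {ι α β γ : Type*} {V W : ι → Type*}

theorem ContainsCopy.of_comap {H : SimpleGraph α} {G : SimpleGraph γ} {φ : β → γ}
    (hφ : Function.Injective φ) (h : ContainsCopy H (G.comap φ)) : ContainsCopy H G := by
  obtain ⟨f, hf⟩ := h
  exact ⟨(Hom.comap φ G).comp f, hφ.comp hf⟩

theorem containsInducedCopy_bot_of_isNIndepSet {G : SimpleGraph β} {n : ℕ} {I : Finset β}
    (hI : G.IsNIndepSet n I) : ContainsInducedCopy (⊥ : SimpleGraph (Fin n)) G := by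
  let e : Fin n ↪ β :=
    (I.equivFinOfCardEq hI.card_eq).symm.toEmbedding.trans (.subtype (· ∈ I))
  have he (a : Fin n) : e a ∈ I := ((I.equivFinOfCardEq hI.card_eq).symm a).2
  refine ⟨⟨e, fun {a b} ↦ iff_of_false (fun hab ↦ ?_) not_false⟩⟩
  exact hI.isIndepSet (he a) (he b) hab.ne hab

/-- The embedding of complete multipartite graphs induced by embeddings of their parts. -/
def completeMultipartiteGraphEmbedding (e : ∀ i, W i ↪ V i) :
    completeMultipartiteGraph W ↪g completeMultipartiteGraph V where
  toEmbedding := (Function.Embedding.refl ι).sigmaMap e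
  map_rel_iff' := Iff.rfl

theorem comap_eq_completeMultipartiteGraph {G : SimpleGraph γ}
    (f : completeMultipartiteGraph V →g G) (hf : ∀ i, G.comap (f ∘ Sigma.mk i) = ⊥) :
    G.comap f = completeMultipartiteGraph V := by
  refine le_antisymm ?_ f.le_comap
  rintro ⟨i, a⟩ ⟨j, b⟩ hab (rfl : i = j)
  have h_part : (G.comap (f ∘ Sigma.mk i)).Adj a b := hab
  simp only [hf i, bot_adj] at h_part

theorem inducedCopy_of_containsCopy_completeMultipartite_general
    (H : SimpleGraph α) (G : SimpleGraph γ)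
    (hRamsey : ∀ i, ∀ G' : SimpleGraph (V i),
      ContainsInducedCopy (⊥ : SimpleGraph (W i)) G' ∨ ContainsCopy H G')
    (hV : ContainsCopy (completeMultipartiteGraph V) G) (hH : ¬ ContainsCopy H G) :
    ContainsInducedCopy (completeMultipartiteGraph W) G := by
  obtain ⟨f, hf⟩ := hV
  have h_indep (i : ι) :
      Nonempty ((⊥ : SimpleGraph (W i)) ↪g G.comap (f ∘ Sigma.mk i)) :=
    (hRamsey i _).resolve_right fun h ↦ hH (h.of_comap (hf.comp sigma_mk_injective))
  let e (i : ι) := (h_indep i).some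
  let r := completeMultipartiteGraphEmbedding fun i ↦ (e i).toEmbedding
  have h_parts (i : ι) : G.comap (f.comp r.toHom ∘ Sigma.mk i) = ⊥ := (e i).comap_eq
  exact isIndContained_iff_exists_comap_eq.mpr
    ⟨⟨f.comp r.toHom, hf.comp r.injective⟩,
      comap_eq_completeMultipartiteGraph (f.comp r.toHom) h_parts⟩

end

/-- If every graph on `m` vertices contains an independent set of size `t` or a copy of `H`,
and `G` contains `K_{s+1}(m)` as a subgraph but no copy of `H`, then `G` contains an induced
copy of `K_{s+1}(t)`. -/
theorem inducedCopy_of_containsCopy_completeMultipartite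
    {α γ : Type*} (H : SimpleGraph α) (G : SimpleGraph γ) (m t s : ℕ)
    (hm : 0 < m) (ht : 0 < t) (hs : 0 < s)
    (hRamsey : ∀ G' : SimpleGraph (Fin m),
      (∃ I : Finset (Fin m), I.card = t ∧ ∀ a ∈ I, ∀ b ∈ I, ¬ G'.Adj a b) ∨ ContainsCopy H G')
    (hKm : ContainsCopy (completeMultipartiteGraph (fun _ : Fin (s + 1) => Fin m)) G)
    (hH : ¬ ContainsCopy H G) :
    ContainsInducedCopy (completeMultipartiteGraph (fun _ : Fin (s + 1) => Fin t)) G := by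
  exact inducedCopy_of_containsCopy_completeMultipartite_general H G (fun _ G' ↦
    (hRamsey G').imp_left fun ⟨_, h_card, hI⟩ ↦ containsInducedCopy_bot_of_isNIndepSet
      ⟨fun a ha b hb _ ↦ hI a ha b hb, h_card⟩) hKm hH
end
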